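/- arXiv:2405.16841 — 3 statements merged into one kernel-verified Lean document; each statement's English description precedes it below -/
import Mathlib

section
/- Let m ≥ 2, let P be an (m−1)×(m−1) real signed permutation matrix, let σ₀ ∈ {1, −1}, and let A be the m×m matrix with entry σ₀ in position (1, m), entries A_{i+1,j} = P_{ij} for 1 ≤ i, j ≤ m−1, and all other entries zero. Suppose that every complex eigenvalue of P has nonpositive real part and that all complex eigenvalues of A are real. Then A is anti-diagonal: A_{ij} = 0 whenever i + j ≠ m + 1. -/
/-- A real signed permutation matrix: all entries in `{-1, 0, 1}`, with exactly one
nonzero entry in each row and each column. -/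
def IsSignedPerm {n : ℕ} (P : Matrix (Fin n) (Fin n) ℝ) : Prop :=
  (∀ i j, P i j = -1 ∨ P i j = 0 ∨ P i j = 1) ∧
  (∀ i, ∃! j, P i j ≠ 0) ∧ (∀ j, ∃! i, P i j ≠ 0)

/-- The m×m matrix with entry `s` in (1-indexed) position (1, m), the matrix `P` in
positions `A_{i+1,j} = P_{ij}` for `1 ≤ i, j ≤ m-1`, and all other entries zero. -/
noncomputable def embedA (m : ℕ) (s : ℝ) (P : Matrix (Fin (m-1)) (Fin (m-1)) ℝ) :
    Matrix (Fin m) (Fin m) ℝ := fun i j =>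
  if hi : (i : ℕ) = 0 then (if (j : ℕ) = m - 1 then s else 0)
  else if hj : (j : ℕ) < m - 1 then
    P ⟨(i : ℕ) - 1, by have := i.isLt; omega⟩ ⟨(j : ℕ), hj⟩
  else 0

/-!
A monomial matrix moves the basis vectors along the cycles of a permutation. A cycle of length `l`
along which the entries multiply to `c` contributes to the spectrum all `l`-th roots of `c`. For
`l ≥ 2` these sum to zero, so if they lie in a closed half-plane bounded by a line through `0` they
lie on that line, which forces `l = 2`. Hence the support of a monomial matrix with spectrum in such
a half-plane is symmetric. This applies to `P` and to `A`, as the real axis bounds a half-plane. As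
`A` contains `P` shifted down by one row, the two symmetries carry the nonzero corner entry down the
whole antidiagonal, which leaves no room for other nonzero entries.
-/

open Function Matrix

lemma sq_eq_one_of_norm_eq_one_of_im_eq_zero {ζ : ℂ} (hnorm : ‖ζ‖ = 1) (him : ζ.im = 0) :
    ζ ^ 2 = 1 := by
  have hconj : (starRingEnd ℂ) ζ = ζ := Complex.conj_eq_iff_im.mpr him
  simpa [hconj, hnorm, sq] using Complex.mul_conj' ζ

lemma dvd_two_of_forall_re_mul_pow_nonpos {ζ z : ℂ} {l : ℕ} (hζ : IsPrimitiveRoot ζ l)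
    (hl : l ≠ 0) (hz : z ≠ 0) (hre : ∀ k, (z * ζ ^ k).re ≤ 0) : l ∣ 2 := by
  obtain rfl | hl1 : l = 1 ∨ 1 < l := by omega
  · exact one_dvd 2
  have hsum : ∑ k ∈ Finset.range l, (z * ζ ^ k).re = 0 := by
    rw [← Complex.re_sum, ← Finset.mul_sum, hζ.geom_sum_eq_zero hl1, mul_zero, Complex.zero_re]
  have hre_zero : ∀ k < l, (z * ζ ^ k).re = 0 := fun k hk =>
    (Finset.sum_eq_zero_iff_of_nonpos fun k _ => hre k).mp hsum k (Finset.mem_range.mpr hk)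
  have hz_re : z.re = 0 := by simpa using hre_zero 0 (by omega)
  have hz_im : z.im ≠ 0 := fun h => hz (Complex.ext hz_re h)
  have hζ_im : ζ.im = 0 := by simpa [Complex.mul_re, hz_re, hz_im] using hre_zero 1 hl1
  exact hζ.dvd_of_pow_eq_one 2
    (sq_eq_one_of_norm_eq_one_of_im_eq_zero (hζ.norm'_eq_one hl) hζ_im)

lemma mem_spectrum_of_vecMul_pow_eq {ι R : Type*} [Fintype ι] [DecidableEq ι] [CommRing R]
    {M : Matrix ι ι R} {v : ι → R} {z : R} {l : ℕ} (hv : v ᵥ* M ^ l = z ^ l • v)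
    (hne : v ᵥ* (∑ k ∈ Finset.range l, z ^ k • M ^ (l - 1 - k)) ≠ 0) : z ∈ spectrum R M := by
  set Z := algebraMap R (Matrix ι ι R) z with hZ
  set Q := ∑ k ∈ Finset.range l, z ^ k • M ^ (l - 1 - k) with hQ
  have hcomm : Commute Z M := Algebra.commutes z M
  have hQ_mul : Q * (Z - M) = Z ^ l - M ^ l := by
    simpa only [hQ, hZ, Algebra.smul_def, map_pow] using hcomm.geom_sum₂_mul l
  have heigen : (v ᵥ* Q) ᵥ* (Z - M) = 0 := by
    rw [vecMul_vecMul, hQ_mul, vecMul_sub, hv, hZ, ← map_pow, Algebra.algebraMap_eq_smul_one,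
      vecMul_smul, vecMul_one, sub_self]
  refine spectrum.mem_iff.mpr fun hunit => hne ?_
  exact vecMul_injective_of_isUnit hunit (heigen.trans (zero_vecMul _).symm)

section Support

variable {ι R : Type*} [Fintype ι] [DecidableEq ι] {M : Matrix ι ι R} {f : ι → ι}

lemma pow_apply_ne_zero_iff [Semiring R] [NoZeroDivisors R] [Nontrivial R]
    (hM : ∀ i j, M i j ≠ 0 ↔ f i = j) (k : ℕ) (i j : ι) :
    (M ^ k) i j ≠ 0 ↔ f^[k] i = j := by
  induction k generalizing i with
  | zero => simp [Matrix.one_apply]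
  | succ k ih =>
    have hrow : ∀ j ≠ f i, M i j = 0 := fun j hj => by
      by_contra hne
      exact hj ((hM i j).mp hne).symm
    have hentry : (M ^ (k + 1)) i j = M i (f i) * (M ^ k) (f i) j := by
      rw [pow_succ', Matrix.mul_apply]
      exact Fintype.sum_eq_single _ fun j' hj' => by rw [hrow j' hj', zero_mul]
    rw [hentry, mul_ne_zero_iff, ih, iterate_succ_apply, and_iff_right ((hM i _).mpr rfl)]

lemma pow_minimalPeriod_apply_self_ne_zero [Semiring R] [NoZeroDivisors R] [Nontrivial R]
    (hM : ∀ i j, M i j ≠ 0 ↔ f i = j) (i : ι) : (M ^ minimalPeriod f i) i i ≠ 0 :=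
  (pow_apply_ne_zero_iff hM _ i i).mpr iterate_minimalPeriod

lemma pow_apply_self_eq_zero_of_lt_minimalPeriod [Semiring R] [NoZeroDivisors R] [Nontrivial R]
    (hM : ∀ i j, M i j ≠ 0 ↔ f i = j) {i : ι} {k : ℕ} (hk : k ≠ 0)
    (hk_lt : k < minimalPeriod f i) : (M ^ k) i i = 0 :=
  not_ne_iff.mp fun h => not_isPeriodicPt_of_pos_of_lt_minimalPeriod hk hk_lt
    ((pow_apply_ne_zero_iff hM k i i).mp h)

lemma mem_spectrum_of_pow_minimalPeriod_eq [CommRing R] [IsDomain R]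
    (hM : ∀ i j, M i j ≠ 0 ↔ f i = j) {i : ι} (hi : i ∈ periodicPts f) {z : R}
    (hz : z ^ minimalPeriod f i = (M ^ minimalPeriod f i) i i) : z ∈ spectrum R M := by
  set l := minimalPeriod f i
  have hl_pos : 0 < l := minimalPeriod_pos_of_mem_periodicPts hi
  have hz_ne : z ≠ 0 :=
    ne_zero_pow hl_pos.ne' (hz ▸ pow_minimalPeriod_apply_self_ne_zero hM i)
  have hrow : Pi.single i 1 ᵥ* M ^ l = z ^ l • Pi.single i 1 := by
    ext j
    rw [single_one_vecMul, row_apply, Pi.smul_apply, smul_eq_mul]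
    obtain rfl | hij := eq_or_ne j i
    · rw [Pi.single_eq_same, mul_one, hz]
    · rw [Pi.single_eq_of_ne hij, mul_zero]
      exact not_ne_iff.mp fun h =>
        hij (((pow_apply_ne_zero_iff hM l i j).mp h).symm.trans iterate_minimalPeriod)
  have hdiag : (∑ k ∈ Finset.range l, z ^ k • M ^ (l - 1 - k)) i i = z ^ (l - 1) := by
    rw [Matrix.sum_apply, Finset.sum_eq_single_of_mem (l - 1) (Finset.mem_range.mpr (by omega))]
    · simp only [tsub_self, pow_zero, Matrix.smul_apply, one_apply_eq, smul_eq_mul, mul_one]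
    · intro k hk hk_ne
      have hk_lt : k < l := Finset.mem_range.mp hk
      rw [Matrix.smul_apply, pow_apply_self_eq_zero_of_lt_minimalPeriod hM (by omega)
        (by omega), smul_zero]
  refine mem_spectrum_of_vecMul_pow_eq hrow fun h => pow_ne_zero (l - 1) hz_ne ?_
  rw [single_one_vecMul] at h
  exact hdiag.symm.trans (congrFun h i)

end Support

/-- A monomial matrix (also called a generalized permutation matrix): every row and every column
has exactly one nonzero entry. -/
def IsMonomial {ι R : Type*} [Zero R] (M : Matrix ι ι R) : Prop :=
  (∀ i, ∃! j, M i j ≠ 0) ∧ ∀ j, ∃! i, M i j ≠ 0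

namespace IsMonomial

lemma exists_injective_support {ι R : Type*} [Zero R] {M : Matrix ι ι R} (hM : IsMonomial M) :
    ∃ f : ι → ι, Injective f ∧ ∀ i j, M i j ≠ 0 ↔ f i = j := by
  choose f hf hf_unique using hM.1
  refine ⟨f, fun i i' h => (hM.2 (f i)).unique (hf i) (h ▸ hf i'), fun i j => ?_⟩
  exact ⟨fun h => (hf_unique i j h).symm, fun h => h ▸ hf i⟩

lemma map {ι R S : Type*} [Zero R] [Zero S] {M : Matrix ι ι R} (hM : IsMonomial M) {φ : R → S}
    (hφ : ∀ x, φ x = 0 ↔ x = 0) : IsMonomial (M.map φ) := by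
  simpa only [IsMonomial, Matrix.map_apply, ne_eq, hφ] using hM

section Corner

variable {n : ℕ} {R : Type*} [Zero R] {A : Matrix (Fin (n + 1)) (Fin (n + 1)) R}

lemma submatrix_succ_castSucc (hA : IsMonomial A) (hcorner : A 0 (Fin.last n) ≠ 0) :
    IsMonomial (A.submatrix Fin.succ Fin.castSucc) := by
  refine ⟨fun i => ?_, fun j => ?_⟩
  · obtain ⟨j, hj, hj_unique⟩ := hA.1 i.succ
    have hj_ne : j ≠ Fin.last n := by
      rintro rfl
      exact i.succ_ne_zero ((hA.2 _).unique hj hcorner)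
    obtain ⟨j, rfl⟩ := Fin.exists_castSucc_eq.mpr hj_ne
    exact ⟨j, hj, fun j' hj' => Fin.castSucc_injective n (hj_unique _ hj')⟩
  · obtain ⟨i, hi, hi_unique⟩ := hA.2 j.castSucc
    have hi_ne : i ≠ 0 := by
      rintro rfl
      exact j.castSucc_ne_last ((hA.1 0).unique hi hcorner)
    obtain ⟨i, rfl⟩ := Fin.exists_succ_eq.mpr hi_ne
    exact ⟨i, hi, fun i' hi' => Fin.succ_injective n (hi_unique _ hi')⟩

lemma of_submatrix_succ_castSucc (hcorner : A 0 (Fin.last n) ≠ 0)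
    (hrow : ∀ j : Fin n, A 0 j.castSucc = 0) (hcol : ∀ i : Fin n, A i.succ (Fin.last n) = 0)
    (hA : IsMonomial (A.submatrix Fin.succ Fin.castSucc)) : IsMonomial A := by
  refine ⟨Fin.cases ?_ fun i => ?_, Fin.lastCases ?_ fun j => ?_⟩
  · exact ⟨Fin.last n, hcorner, Fin.lastCases (fun _ => rfl) fun j hj => absurd (hrow j) hj⟩
  · obtain ⟨j, hj, hj_unique⟩ := hA.1 i
    exact ⟨j.castSucc, hj, Fin.lastCases (fun h => absurd (hcol i) h)
      fun j' hj' => congrArg Fin.castSucc (hj_unique j' hj')⟩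
  · exact ⟨0, hcorner, Fin.cases (fun _ => rfl) fun i hi => absurd (hcol i) hi⟩
  · obtain ⟨i, hi, hi_unique⟩ := hA.2 j
    exact ⟨i.succ, hi, Fin.cases (fun h => absurd (hrow j) h)
      fun i' hi' => congrArg Fin.succ (hi_unique i' hi')⟩

end Corner

theorem apply_ne_zero_symm_of_re_mul_nonpos {ι : Type*} [Fintype ι] [DecidableEq ι]
    {M : Matrix ι ι ℂ} (hM : IsMonomial M) {u : ℂ} (hu : u ≠ 0)
    (hspec : ∀ z ∈ spectrum ℂ M, (u * z).re ≤ 0) {i j : ι} (hij : M i j ≠ 0) : M j i ≠ 0 := by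
  obtain ⟨f, hf_inj, hf⟩ := hM.exists_injective_support
  set l := minimalPeriod f i with hl
  have hi : i ∈ periodicPts f := hf_inj.mem_periodicPts i
  have hl_pos : 0 < l := minimalPeriod_pos_of_mem_periodicPts hi
  obtain ⟨z, hz⟩ := IsAlgClosed.exists_pow_nat_eq ((M ^ l) i i) hl_pos
  have hz_ne : z ≠ 0 :=
    ne_zero_pow hl_pos.ne' (hz ▸ pow_minimalPeriod_apply_self_ne_zero hf i)
  have hζ := Complex.isPrimitiveRoot_exp l hl_pos.ne'
  set ζ := Complex.exp (2 * Real.pi * Complex.I / l)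
  have hmem (k : ℕ) : z * ζ ^ k ∈ spectrum ℂ M := by
    refine mem_spectrum_of_pow_minimalPeriod_eq hf hi ?_
    rw [← hl, mul_pow, pow_right_comm, hζ.pow_eq_one, one_pow, mul_one, hz]
  have hl_dvd : l ∣ 2 := dvd_two_of_forall_re_mul_pow_nonpos hζ hl_pos.ne' (mul_ne_zero hu hz_ne)
    fun k => by simpa only [mul_assoc] using hspec _ (hmem k)
  have hperiodic : f (f i) = i := isPeriodicPt_iff_minimalPeriod_dvd.mpr hl_dvd
  rw [hf] at hij ⊢
  rw [← hij, hperiodic]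

end IsMonomial

/- Transposing in `A` and then in the submatrix moves the position `(i, rev i)` one step down the
antidiagonal, to `(i + 1, rev (i + 1))`. -/
lemma apply_rev_ne_zero_of_symm {n : ℕ} {R : Type*} [Zero R]
    {A : Matrix (Fin (n + 1)) (Fin (n + 1)) R} (hcorner : A 0 (Fin.last n) ≠ 0)
    (hA : ∀ {i j}, A i j ≠ 0 → A j i ≠ 0)
    (hsub : ∀ {i j : Fin n}, A i.succ j.castSucc ≠ 0 → A j.succ i.castSucc ≠ 0)
    (i : Fin (n + 1)) : A i i.rev ≠ 0 := by
  induction i using Fin.induction with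
  | zero => rwa [Fin.rev_zero]
  | succ i ih =>
    rw [Fin.rev_castSucc] at ih
    rw [Fin.rev_succ]
    exact hsub (hA ih)

theorem stmt4_general {n : ℕ} {A : Matrix (Fin (n + 1)) (Fin (n + 1)) ℂ} (hA : IsMonomial A)
    (hcorner : A 0 (Fin.last n) ≠ 0) {u w : ℂ} (hu : u ≠ 0) (hw : w ≠ 0)
    (hsub_spec : ∀ z ∈ spectrum ℂ (A.submatrix Fin.succ Fin.castSucc), (u * z).re ≤ 0)
    (hA_spec : ∀ z ∈ spectrum ℂ A, (w * z).re ≤ 0) {i j : Fin (n + 1)}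
    (hij : (i : ℕ) + j ≠ n) : A i j = 0 := by
  have hrev : A i i.rev ≠ 0 := apply_rev_ne_zero_of_symm hcorner
    (hA.apply_ne_zero_symm_of_re_mul_nonpos hw hA_spec)
    ((hA.submatrix_succ_castSucc hcorner).apply_ne_zero_symm_of_re_mul_nonpos hu hsub_spec) i
  by_contra hne
  have hj : j = i.rev := (hA.1 i).unique hne hrev
  rw [hj, Fin.val_rev] at hij
  omega

lemma IsSignedPerm.isMonomial {n : ℕ} {P : Matrix (Fin n) (Fin n) ℝ} (hP : IsSignedPerm P) :
    IsMonomial P :=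
  hP.2

section EmbedA

variable {n : ℕ} {s : ℝ} {P : Matrix (Fin n) (Fin n) ℝ}

lemma embedA_zero_last : embedA (n + 1) s P 0 (Fin.last n) = s := by
  simp [embedA]

lemma embedA_zero_castSucc (j : Fin n) : embedA (n + 1) s P 0 j.castSucc = 0 := by
  simp [embedA, j.isLt.ne]

lemma embedA_succ_last (i : Fin n) : embedA (n + 1) s P i.succ (Fin.last n) = 0 := by
  simp [embedA]

lemma embedA_succ_castSucc (i j : Fin n) : embedA (n + 1) s P i.succ j.castSucc = P i j := by
  simp [embedA]

lemma submatrix_embedA : (embedA (n + 1) s P).submatrix Fin.succ Fin.castSucc = P :=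
  Matrix.ext fun _ _ => embedA_succ_castSucc (s := s) _ _

lemma isMonomial_embedA (hs : s ≠ 0) (hP : IsMonomial P) : IsMonomial (embedA (n + 1) s P) :=
  .of_submatrix_succ_castSucc (embedA_zero_last.trans_ne hs) embedA_zero_castSucc embedA_succ_last
    (submatrix_embedA.symm ▸ hP)

end EmbedA

/-- If every complex eigenvalue of the signed permutation matrix `P`
has nonpositive real part and all complex eigenvalues of `A` are real, then `A` is
anti-diagonal: `A_{ij} = 0` whenever `i + j ≠ m + 1` (1-indexed). -/
theorem stmt4 (m : ℕ) (hm : 2 ≤ m) (P : Matrix (Fin (m-1)) (Fin (m-1)) ℝ)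
    (hP : IsSignedPerm P) (σ₀ : ℝ) (hσ : σ₀ = 1 ∨ σ₀ = -1)
    (hPspec : ∀ z ∈ spectrum ℂ (P.map Complex.ofReal), z.re ≤ 0)
    (hreal : ∀ z ∈ spectrum ℂ ((embedA m σ₀ P).map Complex.ofReal), z.im = 0) :
    ∀ i j : Fin m, ((i : ℕ) + 1) + ((j : ℕ) + 1) ≠ m + 1 → embedA m σ₀ P i j = 0 := by
  obtain ⟨n, rfl⟩ := Nat.exists_eq_add_of_le' (one_le_two.trans hm)
  have hσ_ne : σ₀ ≠ 0 := by rcases hσ with rfl | rfl <;> norm_num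
  have hA : IsMonomial (embedA (n + 1) σ₀ P) := isMonomial_embedA hσ_ne hP.isMonomial
  exact fun i j hij => Complex.ofReal_eq_zero.mp <|
    stmt4_general (hA.map fun _ => Complex.ofReal_eq_zero) (u := 1) (w := Complex.I)
      (by simpa [embedA_zero_last] using hσ_ne) one_ne_zero Complex.I_ne_zero
      (by simpa [submatrix_map, submatrix_embedA] using hPspec)
      (fun z hz => by simp [hreal z hz]) (by omega)
end

section
/- Let m ≥ 3 be odd, σ₀ ∈ {1, −1}, k ∈ ℝ, and τ > 0. Then the matrix L_τ is diagonalizable over ℂ and every complex eigenvalue of L_τ has zero real part. -/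
/-- The m×m matrix with entries `B_{i+1,j+1} = P_{ij}` (1-indexed) for `1 ≤ i, j ≤ m-1`
and all other entries zero. -/
noncomputable def embedB (m : ℕ) (P : Matrix (Fin (m-1)) (Fin (m-1)) ℝ) :
    Matrix (Fin m) (Fin m) ℝ := fun i j =>
  if h : (i : ℕ) = 0 ∨ (j : ℕ) = 0 then 0
  else P ⟨(i : ℕ) - 1, by have := i.isLt; omega⟩ ⟨(j : ℕ) - 1, by have := j.isLt; omega⟩

/-- The (m-1)×(m-1) matrix `P*` with (1-indexed) entries `p_{ij} = 0` if `i + j ≠ m`,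
and for `i + j = m`: `p_{ij} = σ₀ (-1)^(j-1)` if `j ≤ m/2`, `p_{ij} = σ₀ (-1)^(m-j)`
if `j > m/2`. -/
noncomputable def Pstar (m : ℕ) (σ₀ : ℝ) : Matrix (Fin (m-1)) (Fin (m-1)) ℝ := fun i j =>
  if (i : ℕ) + (j : ℕ) + 2 = m then
    (if 2 * ((j : ℕ) + 1) ≤ m then σ₀ * (-1) ^ (j : ℕ)
     else σ₀ * (-1) ^ (m - ((j : ℕ) + 1)))
  else 0

/-- The m×m complex matrix `L_τ = -ik Ã_τ + B`, where `Ã_τ` has entry `τσ₀` in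
(1-indexed) position (1, m) and `(Ã_τ)_{i+1,j} = P*_{ij}` for `1 ≤ i, j ≤ m-1`,
and `B_{i+1,j+1} = P*_{ij}` with all other entries zero. -/
noncomputable def Lmat (m : ℕ) (σ₀ k τ : ℝ) : Matrix (Fin m) (Fin m) ℂ :=
  (-(Complex.I * (k : ℂ))) • (embedA m (τ * σ₀) (Pstar m σ₀)).map Complex.ofReal
    + (embedB m (Pstar m σ₀)).map Complex.ofReal

/-- The vector `r₀ ∈ ℂ^m` with components `(r₀)_j = (ik)^(j-1)`, `j = 1, …, m`. -/
noncomputable def r0 (m : ℕ) (k : ℝ) : Fin m → ℂ := fun j => (Complex.I * (k : ℂ)) ^ (j : ℕ)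

/-!
Let `W = diag(τ, 1, …, 1)`. The first row of `B` vanishes and `τ` enters `Ã_τ` only through its
first row, so `L_τ = W L_1`. For odd `m`, `P*` is an antidiagonal with alternating signs, which
makes `Ã_1` symmetric and `B` skew-symmetric; hence `L_1` is skew-Hermitian. Writing `W = R R*`, the
product `W L_1` is similar to the skew-Hermitian matrix `R* L_1 R`, and the spectral theorem
applies.
-/

section Diagonalization

open Complex Matrix
open scoped ComplexOrder

variable {n : Type*} [Fintype n] [DecidableEq n]

/-- Diagonalizability over `ℂ` with purely imaginary spectrum: similarity to a diagonal matrix with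
entries `d i * I`, `d i` real. This packages the two conclusions about `L_τ` into one property,
stable under similarity. -/
def IsImaginaryDiagonalizable (A : Matrix n n ℂ) : Prop :=
  ∃ (Q : Matrix n n ℂ) (d : n → ℝ),
    IsUnit Q.det ∧ A = Q * diagonal (fun i => (d i : ℂ) * I) * Q⁻¹

namespace IsImaginaryDiagonalizable

variable {A : Matrix n n ℂ}

theorem conj (hA : IsImaginaryDiagonalizable A) {R : Matrix n n ℂ} (hR : IsUnit R) :
    IsImaginaryDiagonalizable (R * A * R⁻¹) := by
  obtain ⟨Q, d, hQ, rfl⟩ := hA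
  refine ⟨R * Q, d, ?_, ?_⟩
  · rw [det_mul]
    exact ((isUnit_iff_isUnit_det R).1 hR).mul hQ
  · simp only [Matrix.mul_inv_rev, Matrix.mul_assoc]

theorem of_mem_skewAdjoint (hA : A ∈ skewAdjoint (Matrix n n ℂ)) :
    IsImaginaryDiagonalizable A := by
  have hH : (-I • A).IsHermitian :=
    isSelfAdjoint_smul_of_mem_skewAdjoint (neg_mem I_mem_skewAdjoint) hA
  let U : Matrix n n ℂ := hH.eigenvectorUnitary
  have hU : U * star U = 1 := Unitary.coe_mul_star_self hH.eigenvectorUnitary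
  have hspec : -I • A = U * diagonal (fun i => (hH.eigenvalues i : ℂ)) * star U := by
    have h := hH.spectral_theorem
    rwa [Unitary.conjStarAlgAut_apply] at h
  refine ⟨U, hH.eigenvalues, isUnit_det_of_right_inverse hU, ?_⟩
  calc
    A = I • (-I • A) := by simp [smul_smul]
    _ = U * (I • diagonal (fun i => (hH.eigenvalues i : ℂ))) * star U := by
      rw [Matrix.mul_smul, Matrix.smul_mul, ← hspec]
    _ = U * diagonal (fun i => (hH.eigenvalues i : ℂ) * I) * U⁻¹ := by
      rw [inv_eq_right_inv hU, ← diagonal_smul]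
      simp only [Pi.smul_def, smul_eq_mul, mul_comm]

open scoped MatrixOrder Matrix.Norms.L2Operator in
theorem posDef_mul {W : Matrix n n ℂ} (hW : W.PosDef) (hA : A ∈ skewAdjoint (Matrix n n ℂ)) :
    IsImaginaryDiagonalizable (W * A) := by
  obtain ⟨R, hR, rfl⟩ :=
    CStarAlgebra.isStrictlyPositive_iff_eq_mul_star_self.1 hW.isStrictlyPositive
  have hsimilar : R * star R * A = R * (star R * A * R) * R⁻¹ := by
    simp only [Matrix.mul_assoc, mul_nonsing_inv R ((isUnit_iff_isUnit_det R).1 hR), Matrix.mul_one]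
  rw [hsimilar]
  exact (of_mem_skewAdjoint (skewAdjoint.conjugate' hA R)).conj hR

theorem re_eq_zero_of_mem_spectrum (hA : IsImaginaryDiagonalizable A) {z : ℂ}
    (hz : z ∈ spectrum ℂ A) : z.re = 0 := by
  obtain ⟨Q, d, hQ, rfl⟩ := hA
  obtain ⟨u, rfl⟩ := (isUnit_iff_isUnit_det Q).2 hQ
  rw [← coe_units_inv, spectrum.units_conjugate, spectrum_diagonal] at hz
  obtain ⟨i, rfl⟩ := hz
  rw [re_ofReal_mul, I_re, mul_zero]

end IsImaginaryDiagonalizable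

end Diagonalization

section Blocks

open Matrix

variable (m : ℕ)

/-- The diagonal of the positive definite matrix `W_τ = diag(τ, 1, …, 1)` for which
`L_τ = W_τ L_1`. -/
def headWeight (τ : ℝ) : Fin m → ℝ := fun i => if (i : ℕ) = 0 then τ else 1

variable {m}

theorem headWeight_pos {τ : ℝ} (hτ : 0 < τ) (i : Fin m) : 0 < headWeight m τ i := by
  unfold headWeight
  split_ifs <;> positivity

theorem embedA_mul_eq_diagonal_mul (s τ : ℝ) (P : Matrix (Fin (m - 1)) (Fin (m - 1)) ℝ) :
    embedA m (τ * s) P = diagonal (headWeight m τ) * embedA m s P := by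
  ext i j
  by_cases hi : (i : ℕ) = 0 <;> simp [embedA, headWeight, diagonal_mul, hi]

theorem embedB_eq_diagonal_mul (τ : ℝ) (P : Matrix (Fin (m - 1)) (Fin (m - 1)) ℝ) :
    embedB m P = diagonal (headWeight m τ) * embedB m P := by
  ext i j
  by_cases hi : (i : ℕ) = 0 <;> simp [embedB, headWeight, diagonal_mul, hi]

theorem embedB_transpose (P : Matrix (Fin (m - 1)) (Fin (m - 1)) ℝ) :
    (embedB m P)ᵀ = embedB m Pᵀ := by
  ext i j
  simp only [embedB, transpose_apply, or_comm]

theorem embedB_neg (P : Matrix (Fin (m - 1)) (Fin (m - 1)) ℝ) :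
    embedB m (-P) = -embedB m P := by
  ext i j
  by_cases h : (i : ℕ) = 0 ∨ (j : ℕ) = 0 <;> simp [embedB, h]

variable (σ₀ : ℝ)

theorem Pstar_apply_of_odd (hm : Odd m) (i j : Fin (m - 1)) :
    Pstar m σ₀ i j = if (i : ℕ) + j + 2 = m then σ₀ * (-1) ^ (j : ℕ) else 0 := by
  have hparity : (-1 : ℝ) ^ (m - ((j : ℕ) + 1)) = (-1) ^ (j : ℕ) :=
    neg_one_pow_congr (by grind)
  simp only [Pstar, hparity, ite_self]

theorem Pstar_transpose_of_odd (hm : Odd m) : (Pstar m σ₀)ᵀ = -Pstar m σ₀ := by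
  ext i j
  rw [transpose_apply, Matrix.neg_apply, Pstar_apply_of_odd σ₀ hm, Pstar_apply_of_odd σ₀ hm,
    add_comm (j : ℕ)]
  split_ifs with hij
  · have hparity : (-1 : ℝ) ^ (i : ℕ) = (-1) ^ ((j : ℕ) + 1) := neg_one_pow_congr (by grind)
    rw [hparity]
    ring
  · exact neg_zero.symm

theorem embedA_Pstar_apply_of_odd (hm : Odd m) (i j : Fin m) :
    embedA m σ₀ (Pstar m σ₀) i j =
      if (i : ℕ) + j + 1 = m then σ₀ * (-1) ^ (j : ℕ) else 0 := by
  have hlast : (-1 : ℝ) ^ (m - 1) = 1 := (Nat.Odd.sub_odd hm odd_one).neg_one_pow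
  simp only [embedA, Pstar_apply_of_odd σ₀ hm]
  split_ifs <;> grind

theorem embedA_Pstar_isSymm_of_odd (hm : Odd m) : (embedA m σ₀ (Pstar m σ₀)).IsSymm := by
  ext i j
  simp only [transpose_apply, embedA_Pstar_apply_of_odd σ₀ hm, add_comm (j : ℕ)]
  split_ifs with hij
  · rw [neg_one_pow_congr (show Even (i : ℕ) ↔ Even (j : ℕ) by grind)]
  · rfl

theorem embedB_Pstar_transpose_of_odd (hm : Odd m) :
    (embedB m (Pstar m σ₀))ᵀ = -embedB m (Pstar m σ₀) := by
  rw [embedB_transpose, Pstar_transpose_of_odd σ₀ hm, embedB_neg]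

end Blocks

section Lmat

open Complex Matrix
open scoped ComplexOrder

theorem conjTranspose_map_ofReal {p q : Type*} (M : Matrix p q ℝ) :
    (M.map ofReal)ᴴ = Mᵀ.map ofReal := by
  ext i j
  exact conj_ofReal _

variable (m : ℕ) (σ₀ k τ : ℝ)

theorem Lmat_eq_diagonal_mul :
    Lmat m σ₀ k τ = diagonal (fun i => (headWeight m τ i : ℂ)) * Lmat m σ₀ k 1 := by
  have hmap (M : Matrix (Fin m) (Fin m) ℝ) :
      (diagonal (headWeight m τ) * M).map ofReal =
        diagonal (fun i => (headWeight m τ i : ℂ)) * M.map ofReal := by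
    ext i j
    simp [diagonal_mul]
  simp only [Lmat, one_mul]
  rw [Matrix.mul_add, Matrix.mul_smul, ← hmap, ← hmap, ← embedA_mul_eq_diagonal_mul,
    ← embedB_eq_diagonal_mul]

variable {m}

theorem Lmat_one_mem_skewAdjoint (hm : Odd m) :
    Lmat m σ₀ k 1 ∈ skewAdjoint (Matrix (Fin m) (Fin m) ℂ) := by
  have hA : IsSelfAdjoint ((embedA m (1 * σ₀) (Pstar m σ₀)).map ofReal) := by
    rw [one_mul, isSelfAdjoint_iff, star_eq_conjTranspose, conjTranspose_map_ofReal,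
      embedA_Pstar_isSymm_of_odd σ₀ hm]
  have hB : (embedB m (Pstar m σ₀)).map ofReal ∈ skewAdjoint (Matrix (Fin m) (Fin m) ℂ) := by
    rw [skewAdjoint.mem_iff, star_eq_conjTranspose, conjTranspose_map_ofReal,
      embedB_Pstar_transpose_of_odd σ₀ hm]
    ext i j
    simp
  have hk : -(I * (k : ℂ)) ∈ skewAdjoint ℂ := by
    simp [skewAdjoint.mem_iff]
  exact add_mem (hA.smul_mem_skewAdjoint hk) hB

variable {τ}

theorem Lmat_isImaginaryDiagonalizable (hm : Odd m) (hτ : 0 < τ) :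
    IsImaginaryDiagonalizable (Lmat m σ₀ k τ) := by
  have hW : (diagonal (fun i => (headWeight m τ i : ℂ))).PosDef :=
    .diagonal fun i => by exact_mod_cast headWeight_pos hτ i
  rw [Lmat_eq_diagonal_mul]
  exact .posDef_mul hW (Lmat_one_mem_skewAdjoint σ₀ k hm)

end Lmat

theorem stmt11_general (m : ℕ) (hodd : Odd m) (σ₀ k τ : ℝ) (hτ : 0 < τ) :
    (∃ (Q : Matrix (Fin m) (Fin m) ℂ) (d : Fin m → ℂ),
      IsUnit Q.det ∧ Lmat m σ₀ k τ = Q * Matrix.diagonal d * Q⁻¹) ∧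
    ∀ z ∈ spectrum ℂ (Lmat m σ₀ k τ), z.re = 0 := by
  have hL := Lmat_isImaginaryDiagonalizable σ₀ k hodd hτ
  refine ⟨?_, fun z hz => hL.re_eq_zero_of_mem_spectrum hz⟩
  obtain ⟨Q, d, hQ, hQd⟩ := hL
  exact ⟨Q, _, hQ, hQd⟩

/-- For odd `m ≥ 3`, `σ₀ = ±1`, `k ∈ ℝ`, and `τ > 0`, the matrix
`L_τ` is diagonalizable over ℂ and every complex eigenvalue of `L_τ` has zero real
part. -/
theorem stmt11 (m : ℕ) (hm : 3 ≤ m) (hodd : Odd m) (σ₀ : ℝ) (hσ : σ₀ = 1 ∨ σ₀ = -1)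
    (k τ : ℝ) (hτ : 0 < τ) :
    (∃ (Q : Matrix (Fin m) (Fin m) ℂ) (d : Fin m → ℂ),
      IsUnit Q.det ∧ Lmat m σ₀ k τ = Q * Matrix.diagonal d * Q⁻¹) ∧
    ∀ z ∈ spectrum ℂ (Lmat m σ₀ k τ), z.re = 0 :=
  stmt11_general m hodd σ₀ k τ hτ
end

section
/- Let m ≥ 2, let σ₀ = ±1 if m is odd and σ₀ = (−1)^{m/2} if m is even, and fix k ∈ ℝ. Then there exist τ̄ > 0, a function λ : (0, τ̄) → ℂ, a function v : (0, τ̄) → ℂ^m, and a constant C > 0 such that for all τ ∈ (0, τ̄): L_τ v(τ) = λ(τ) v(τ), ‖v(τ) − r₀‖ ≤ Cτ, and |λ(τ) + σ₀ τ (ik)^m| ≤ Cτ², where r₀ ∈ ℂ^m is the vector with components (r₀)_j = (ik)^{j−1} for j = 1, …, m. -/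
/-!
At `τ = 0` the first row of `L_τ` vanishes, and the remaining rows say `v_{j+1} = ik v_j` up to
the nonzero factors of `P*`. Hence `0` is a simple eigenvalue of `L_0`, with right eigenvector
`r₀` and left eigenvector `e₁`. Since `L_τ - L_0 = τN`, where the only nonzero entry of `N` is
`-ik σ₀` in position `(1, m)`, first-order perturbation theory gives an eigenvalue
`τ ⟨e₁, N r₀⟩ + O(τ²) = -σ₀ τ (ik)^m + O(τ²)`. The perturbation theorem is the implicit function
theorem applied to the equations `(A + τN) v = λ v`, `ℓ v = 1` in the unknown `(v, λ)`.
-/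

open Asymptotics Filter Matrix Topology

section SimpleEigenvalue

variable {𝕜 E : Type*} [NontriviallyNormedField 𝕜] [NormedAddCommGroup E] [NormedSpace 𝕜 E]

/-- The bordered operator `(u, ν) ↦ (A u - μ u - ν r, ℓ u)` of an approximate eigenpair `(r, μ)`
of `A` and a normalizing functional `ℓ`. It is the derivative at `(r, μ)` of the eigenvalue
equation normalized by `ℓ`, so its invertibility expresses that the eigenvalue is simple. -/
def borderedOperator (A : E →L[𝕜] E) (μ : 𝕜) (r : E) (ℓ : E →L[𝕜] 𝕜) : E × 𝕜 →L[𝕜] E × 𝕜 :=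
  ((A - μ • .id 𝕜 E).coprod (-.toSpanSingleton 𝕜 r)).prod (ℓ ∘L .fst 𝕜 E 𝕜)

@[simp]
lemma borderedOperator_apply (A : E →L[𝕜] E) (μ : 𝕜) (r : E) (ℓ : E →L[𝕜] 𝕜) (p : E × 𝕜) :
    borderedOperator A μ r ℓ p = (A p.1 - μ • p.1 - p.2 • r, ℓ p.1) := by
  simp [borderedOperator, sub_eq_add_neg]

lemma isInvertible_borderedOperator [CompleteSpace 𝕜] [FiniteDimensional 𝕜 E]
    {A : E →L[𝕜] E} {μ : 𝕜} {r : E} {ℓ : E →L[𝕜] 𝕜} (hr : ℓ r = 1)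
    (hℓ : ∀ x, ℓ (A x) = μ * ℓ x) (hker : ∀ x, A x = μ • x → ℓ x = 0 → x = 0) :
    (borderedOperator A μ r ℓ).IsInvertible := by
  have hinj : Function.Injective (borderedOperator A μ r ℓ).toLinearMap := by
    refine (injective_iff_map_eq_zero _).2 fun ⟨u, ν⟩ h ↦ ?_
    simp only [ContinuousLinearMap.coe_coe, borderedOperator_apply, Prod.mk_eq_zero] at h
    obtain ⟨hu, hℓu⟩ := h
    have hν : ν = 0 := by simpa [hℓ, hr] using congrArg ℓ hu
    simp [hν, hker u (by simpa [hν, sub_eq_zero] using hu) hℓu]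
  exact ⟨(LinearEquiv.ofInjectiveEndo _ hinj).toContinuousLinearEquiv, by ext <;> simp⟩

/-- The eigenvalue equation `(A + τN) v = λ v` together with the normalization `ℓ v = 1`, as the
zero set of a function of `(τ, (v, λ))`. -/
def eigenpairResidual (A N : E →L[𝕜] E) (ℓ : E →L[𝕜] 𝕜) (p : 𝕜 × E × 𝕜) : E × 𝕜 :=
  (A p.2.1 + p.1 • N p.2.1 - p.2.2 • p.2.1, ℓ p.2.1 - 1)

lemma eigenpairResidual_eq_zero {A N : E →L[𝕜] E} {ℓ : E →L[𝕜] 𝕜} {p : 𝕜 × E × 𝕜} :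
    eigenpairResidual A N ℓ p = 0 ↔
      A p.2.1 + p.1 • N p.2.1 = p.2.2 • p.2.1 ∧ ℓ p.2.1 = 1 := by
  simp [eigenpairResidual, sub_eq_zero]

lemma exists_hasStrictFDerivAt_eigenpairResidual (A N : E →L[𝕜] E) (ℓ : E →L[𝕜] 𝕜) (r : E)
    (μ : 𝕜) : ∃ F' : 𝕜 × E × 𝕜 →L[𝕜] E × 𝕜,
      HasStrictFDerivAt (eigenpairResidual A N ℓ) F' (0, r, μ) ∧
        F' ∘L .inr 𝕜 𝕜 (E × 𝕜) = borderedOperator A μ r ℓ := by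
  have hτ := hasStrictFDerivAt_fst (𝕜 := 𝕜) (p := ((0 : 𝕜), r, μ))
  have hp := hasStrictFDerivAt_snd (𝕜 := 𝕜) (p := ((0 : 𝕜), r, μ))
  have hv := hp.fst
  have hlam := hp.snd
  refine ⟨_, (((A.hasStrictFDerivAt.comp _ hv).add (hτ.smul (N.hasStrictFDerivAt.comp _ hv))).sub
    (hlam.smul hv)).prodMk ((ℓ.hasStrictFDerivAt.comp _ hv).sub_const 1), ?_⟩
  ext <;> simp

theorem exists_eigenpair_add_smul_of_isInvertible [CompleteSpace 𝕜] [CompleteSpace E]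
    {A : E →L[𝕜] E} (N : E →L[𝕜] E) {μ : 𝕜} {r : E} {ℓ : E →L[𝕜] 𝕜} (hAr : A r = μ • r)
    (hr : ℓ r = 1) (hℓ : ∀ x, ℓ (A x) = μ * ℓ x) (hinv : (borderedOperator A μ r ℓ).IsInvertible) :
    ∃ (v : 𝕜 → E) (lam : 𝕜 → 𝕜), (∀ᶠ τ in 𝓝 0, A (v τ) + τ • N (v τ) = lam τ • v τ) ∧
      (fun τ ↦ v τ - r) =O[𝓝 0] (fun τ ↦ τ) ∧
      (fun τ ↦ lam τ - (μ + τ * ℓ (N r))) =O[𝓝 0] (fun τ ↦ τ ^ 2) := by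
  obtain ⟨F', hF', hF'inr⟩ := exists_hasStrictFDerivAt_eigenpairResidual A N ℓ r μ
  rw [← hF'inr] at hinv
  have hbase : eigenpairResidual A N ℓ (0, r, μ) = 0 := by simp [eigenpairResidual, hAr, hr]
  have hzero := hF'.eventually_apply_implicitFunctionOfProdDomain hinv
  have hψ0 := (hF'.eventually_apply_eq_iff_implicitFunctionOfProdDomain hinv).self_of_nhds.1 rfl
  have hψ := (hF'.hasStrictFDerivAt_implicitFunctionOfProdDomain hinv).hasFDerivAt.isBigO_sub
  set ψ := hF'.implicitFunctionOfProdDomain hinv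
  simp only [hbase, eigenpairResidual_eq_zero] at hzero
  simp only [hψ0, sub_zero] at hψ
  have hv : (fun τ ↦ (ψ τ).1 - r) =O[𝓝 0] (fun τ ↦ τ) := isBigO_fst_prod.trans hψ
  refine ⟨fun τ ↦ (ψ τ).1, fun τ ↦ (ψ τ).2, hzero.mono fun _ h ↦ h.1, hv, ?_⟩
  -- Pairing the eigenvalue equation with `ℓ` gives `λ = μ + τ ℓ(N v)`.
  have hlam : (fun τ ↦ τ * ℓ (N ((ψ τ).1 - r))) =ᶠ[𝓝 0]
      fun τ ↦ (ψ τ).2 - (μ + τ * ℓ (N r)) := by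
    filter_upwards [hzero] with τ ⟨heig, hnorm⟩
    have hpair := congrArg ℓ heig
    simp only [map_add, map_smul, hℓ, hnorm, smul_eq_mul, mul_one] at hpair
    rw [← hpair, map_sub, map_sub]
    ring
  refine IsBigO.congr' ?_ hlam (.of_forall fun τ ↦ (sq τ).symm)
  exact (isBigO_refl _ _).mul (((ℓ ∘L N).isBigO_comp _ _).trans hv)

theorem exists_eigenpair_add_smul [CompleteSpace 𝕜] [FiniteDimensional 𝕜 E]
    {A : E →L[𝕜] E} (N : E →L[𝕜] E) {μ : 𝕜} {r : E} {ℓ : E →L[𝕜] 𝕜} (hAr : A r = μ • r)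
    (hr : ℓ r = 1) (hℓ : ∀ x, ℓ (A x) = μ * ℓ x) (hker : ∀ x, A x = μ • x → ℓ x = 0 → x = 0) :
    ∃ (v : 𝕜 → E) (lam : 𝕜 → 𝕜), (∀ᶠ τ in 𝓝 0, A (v τ) + τ • N (v τ) = lam τ • v τ) ∧
      (fun τ ↦ v τ - r) =O[𝓝 0] (fun τ ↦ τ) ∧
      (fun τ ↦ lam τ - (μ + τ * ℓ (N r))) =O[𝓝 0] (fun τ ↦ τ ^ 2) :=
  have := FiniteDimensional.complete 𝕜 E
  exists_eigenpair_add_smul_of_isInvertible N hAr hr hℓ (isInvertible_borderedOperator hr hℓ hker)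

end SimpleEigenvalue

section Lmat

variable {n : ℕ}

lemma embedA_eq_add_single (s : ℝ) (P : Matrix (Fin n) (Fin n) ℝ) :
    embedA (n + 1) s P = embedA (n + 1) 0 P + Matrix.single 0 (Fin.last n) s := by
  ext i j
  refine Fin.cases ?_ (fun i ↦ ?_) i
  · simp [embedA, Matrix.single_apply, Fin.ext_iff, eq_comm]
  · simp [embedA, (Fin.succ_ne_zero i).symm]

lemma embedA_zero_map_mulVec (P : Matrix (Fin n) (Fin n) ℝ) (v : Fin (n + 1) → ℂ) :
    (embedA (n + 1) 0 P).map Complex.ofReal *ᵥ v =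
      Fin.cons 0 (P.map Complex.ofReal *ᵥ Fin.init v) := by
  ext i
  refine Fin.cases ?_ (fun i ↦ ?_) i <;>
    simp [embedA, mulVec, dotProduct, Fin.sum_univ_castSucc, Fin.init]

lemma embedB_map_mulVec (P : Matrix (Fin n) (Fin n) ℝ) (v : Fin (n + 1) → ℂ) :
    (embedB (n + 1) P).map Complex.ofReal *ᵥ v =
      Fin.cons 0 (P.map Complex.ofReal *ᵥ Fin.tail v) := by
  ext i
  refine Fin.cases ?_ (fun i ↦ ?_) i <;>
    simp [embedB, mulVec, dotProduct, Fin.sum_univ_succ, Fin.tail]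

lemma Lmat_eq_add_smul_single (σ₀ k τ : ℝ) :
    Lmat (n + 1) σ₀ k τ = Lmat (n + 1) σ₀ k 0 +
      (τ : ℂ) • Matrix.single 0 (Fin.last n) (-(σ₀ * (Complex.I * k))) := by
  have hmap : (Matrix.single (0 : Fin (n + 1)) (Fin.last n) (τ * σ₀)).map Complex.ofReal =
      Matrix.single 0 (Fin.last n) ((τ : ℂ) * σ₀) := by
    rw [← Complex.ofReal_mul]
    exact Matrix.map_single _ _ _ Complex.ofRealHom
  rw [Lmat, Lmat, embedA_eq_add_single, zero_mul, Matrix.map_add _ Complex.ofReal_add, hmap,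
    smul_add, add_right_comm, Matrix.smul_single, Matrix.smul_single]
  congr 2
  simp only [smul_eq_mul]
  ring

lemma Lmat_zero_mulVec (σ₀ k : ℝ) (v : Fin (n + 1) → ℂ) :
    Lmat (n + 1) σ₀ k 0 *ᵥ v = Fin.cons 0 ((Pstar (n + 1) σ₀).map Complex.ofReal *ᵥ
      (Fin.tail v - (Complex.I * k) • Fin.init v)) := by
  rw [Lmat, zero_mul, add_mulVec, smul_mulVec, embedA_zero_map_mulVec, embedB_map_mulVec,
    mulVec_sub, mulVec_smul]
  ext i
  refine Fin.cases ?_ (fun i ↦ ?_) i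
  · simp
  · simp [sub_eq_neg_add]

lemma Pstar_eq_zero_of_ne_rev (σ₀ : ℝ) {i j : Fin n} (h : j ≠ i.rev) :
    Pstar (n + 1) σ₀ i j = 0 := by
  refine if_neg fun hij ↦ h (Fin.ext ?_)
  rw [Fin.val_rev]
  omega

lemma Pstar_rev_ne_zero {σ₀ : ℝ} (hσ₀ : σ₀ ≠ 0) (j : Fin n) :
    Pstar (n + 1) σ₀ j.rev j ≠ 0 := by
  have hij : (j.rev : ℕ) + j + 2 = n + 1 := by rw [Fin.val_rev]; omega
  rw [Pstar, if_pos hij]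
  split_ifs <;> simp [hσ₀]

lemma Pstar_map_mulVec_rev (σ₀ : ℝ) (w : Fin n → ℂ) (j : Fin n) :
    ((Pstar (n + 1) σ₀).map Complex.ofReal *ᵥ w) j.rev = Pstar (n + 1) σ₀ j.rev j * w j := by
  refine Fintype.sum_eq_single j fun l hl ↦ ?_
  simp [Pstar_eq_zero_of_ne_rev σ₀ (i := j.rev) (j := l) (by simpa using hl)]

lemma eq_zero_of_Pstar_map_mulVec_eq_zero {σ₀ : ℝ} (hσ₀ : σ₀ ≠ 0) {w : Fin n → ℂ}
    (h : (Pstar (n + 1) σ₀).map Complex.ofReal *ᵥ w = 0) : w = 0 := by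
  ext j
  have hj := congrFun h j.rev
  rw [Pstar_map_mulVec_rev] at hj
  simpa [Pstar_rev_ne_zero hσ₀ j] using hj

lemma Lmat_zero_mulVec_r0 (σ₀ k : ℝ) : Lmat (n + 1) σ₀ k 0 *ᵥ r0 (n + 1) k = 0 := by
  have htail : Fin.tail (r0 (n + 1) k) = (Complex.I * k) • Fin.init (r0 (n + 1) k) := by
    ext j
    simp [Fin.tail, Fin.init, r0, pow_succ']
  rw [Lmat_zero_mulVec, htail, sub_self, mulVec_zero]
  exact Fin.cons_self_tail 0

lemma eq_zero_of_Lmat_zero_mulVec_eq_zero {σ₀ : ℝ} (hσ₀ : σ₀ ≠ 0) {k : ℝ}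
    {v : Fin (n + 1) → ℂ} (hv : Lmat (n + 1) σ₀ k 0 *ᵥ v = 0) (hv0 : v 0 = 0) : v = 0 := by
  rw [Lmat_zero_mulVec] at hv
  have hrec := eq_zero_of_Pstar_map_mulVec_eq_zero hσ₀ (congrArg Fin.tail hv)
  ext i
  induction i using Fin.induction with
  | zero => exact hv0
  | succ j ih => simpa [Fin.tail, Fin.init, ih] using congrFun hrec j

lemma exists_Lmat_eigenpair_isBigO (n : ℕ) {σ₀ : ℝ} (hσ₀ : σ₀ ≠ 0) (k : ℝ) :
    ∃ (v : ℝ → Fin (n + 1) → ℂ) (lam : ℝ → ℂ),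
      (∀ᶠ τ in 𝓝 0, Lmat (n + 1) σ₀ k τ *ᵥ v τ = lam τ • v τ) ∧
      (fun τ ↦ v τ - r0 (n + 1) k) =O[𝓝 0] (fun τ ↦ τ) ∧
      (fun τ ↦ lam τ + σ₀ * τ * (Complex.I * k) ^ (n + 1)) =O[𝓝 0] (fun τ ↦ τ ^ 2) := by
  let A := (mulVecLin (Lmat (n + 1) σ₀ k 0)).toContinuousLinearMap
  let N := (mulVecLin (Matrix.single (0 : Fin (n + 1)) (Fin.last n)
    (-(σ₀ * (Complex.I * k))))).toContinuousLinearMap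
  let ℓ : (Fin (n + 1) → ℂ) →L[ℂ] ℂ := .proj 0
  obtain ⟨v, lam, heig, hv, hlam⟩ := exists_eigenpair_add_smul (A := A) N (μ := 0)
    (r := r0 (n + 1) k) (ℓ := ℓ) (by simp [A, Lmat_zero_mulVec_r0]) (by simp [ℓ, r0])
    (fun x ↦ by simp [A, ℓ, Lmat_zero_mulVec])
    fun x hx hx0 ↦ eq_zero_of_Lmat_zero_mulVec_eq_zero hσ₀ (by simpa [A] using hx) hx0
  have hNr : ℓ (N (r0 (n + 1) k)) = -(σ₀ * (Complex.I * k) ^ (n + 1)) := by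
    simp [ℓ, N, Matrix.single_mulVec, r0, pow_succ', mul_assoc]
  have hcast : Tendsto Complex.ofReal (𝓝 0) (𝓝 0) := Complex.continuous_ofReal.tendsto' 0 0 rfl
  refine ⟨fun τ ↦ v τ, fun τ ↦ lam τ, (hcast.eventually heig).mono fun τ h ↦ ?_,
    Complex.isBigO_ofReal_right.1 (hv.comp_tendsto hcast), Complex.isBigO_ofReal_right.1 ?_⟩
  · rw [Lmat_eq_add_smul_single, add_mulVec, smul_mulVec]
    exact h
  · refine (hlam.comp_tendsto hcast).congr (fun τ ↦ ?_) fun τ ↦ (Complex.ofReal_pow τ 2).symm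
    simp only [Function.comp_apply, hNr]
    ring

end Lmat

theorem stmt12_general (n : ℕ) {σ₀ : ℝ} (hσ₀ : σ₀ ≠ 0) (k : ℝ) :
    ∃ τbar : ℝ, 0 < τbar ∧ ∃ (lam : ℝ → ℂ) (v : ℝ → Fin (n + 1) → ℂ) (C : ℝ), 0 < C ∧
      ∀ τ ∈ Set.Ioo 0 τbar,
        Lmat (n + 1) σ₀ k τ *ᵥ v τ = lam τ • v τ ∧
        ‖v τ - r0 (n + 1) k‖ ≤ C * τ ∧
        ‖lam τ + σ₀ * τ * (Complex.I * k) ^ (n + 1)‖ ≤ C * τ ^ 2 := by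
  obtain ⟨v, lam, heig, hv, hlam⟩ := exists_Lmat_eigenpair_isBigO n hσ₀ k
  obtain ⟨C₁, hC₁, hv⟩ := hv.exists_pos
  obtain ⟨C₂, -, hlam⟩ := hlam.exists_pos
  obtain ⟨τbar, hτbar, hball⟩ := Metric.eventually_nhds_iff.1 (heig.and (hv.bound.and hlam.bound))
  refine ⟨τbar, hτbar, lam, v, max C₁ C₂, lt_max_of_lt_left hC₁, fun τ ⟨hτ, hττbar⟩ ↦ ?_⟩
  have hnorm : ‖τ‖ = τ := Real.norm_of_nonneg hτ.le
  obtain ⟨heigτ, hvτ, hlamτ⟩ := hball (y := τ) (by rwa [dist_zero_right, hnorm])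
  rw [hnorm] at hvτ
  rw [norm_pow, hnorm] at hlamτ
  exact ⟨heigτ, hvτ.trans (by gcongr; exact le_max_left _ _),
    hlamτ.trans (by gcongr; exact le_max_right _ _)⟩

/-- For small `τ > 0` the matrix `L_τ` has an eigenpair `(λ(τ), v(τ))`
with `‖v(τ) - r₀‖ ≤ Cτ` and `|λ(τ) + σ₀ τ (ik)^m| ≤ Cτ²`. -/
theorem stmt12 (m : ℕ) (hm : 2 ≤ m) (σ₀ : ℝ)
    (hσ : (Odd m ∧ (σ₀ = 1 ∨ σ₀ = -1)) ∨ (Even m ∧ σ₀ = (-1) ^ (m / 2)))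
    (k : ℝ) :
    ∃ (τbar : ℝ), 0 < τbar ∧ ∃ (lam : ℝ → ℂ) (v : ℝ → (Fin m → ℂ)) (C : ℝ), 0 < C ∧
      ∀ τ ∈ Set.Ioo (0 : ℝ) τbar,
        (Lmat m σ₀ k τ).mulVec (v τ) = lam τ • v τ ∧
        ‖v τ - r0 m k‖ ≤ C * τ ∧
        ‖lam τ + (σ₀ : ℂ) * (τ : ℂ) * (Complex.I * (k : ℂ)) ^ m‖ ≤ C * τ ^ 2 := by
  obtain ⟨n, rfl⟩ := Nat.exists_eq_add_of_le' (one_le_two.trans hm)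
  exact stmt12_general n (by rcases hσ with ⟨-, rfl | rfl⟩ | ⟨-, rfl⟩ <;> simp) k
end
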